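/- Suppose M is uniformly continuous and let M ∈ Ẽ(M). Then there exist Λ ∈ E(M) ∪ {0} and Λ_⊥ ∈ E_⊥(M) ∪ {0} such that M = M(G)·Λ + (1 − M(G))·Λ_⊥, and this decomposition is unique if 0 < M(G) < 1. -/

import Mathlib

open MeasureTheory Filter Topology
open scoped ENNReal NNReal Classical

noncomputable section

/-- A countable Markov system `(K_{i(e)}, w_e, p_e)_{e ∈ E}` on a metric space `K`:
a partition `(K_j)_{j ∈ N}` of `K` into nonempty Borel sets, source and target maps
`i, t : E → N` (`i` surjective), and for each `e ∈ E` Borel maps `w_e` and probability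
functions `p_e` (extended by zero outside `K_{i(e)}`) with
`∑_{e, i(e)=j} p_e(y) = 1` for `y ∈ K_j`. -/
structure MarkovSystem (K : Type*) [MetricSpace K] [MeasurableSpace K]
    (N : Type*) (E : Type*) where
  Kset : N → Set K
  Kset_nonempty : ∀ j, (Kset j).Nonempty
  Kset_measurable : ∀ j, MeasurableSet (Kset j)
  Kset_disjoint : Pairwise (Function.onFun Disjoint Kset)
  Kset_cover : (⋃ j, Kset j) = Set.univ
  i : E → N
  t : E → N
  i_surj : Function.Surjective i
  w : E → K → K
  p : E → K → ℝ
  w_measurable : ∀ e, Measurable (w e)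
  p_measurable : ∀ e, Measurable (p e)
  p_nonneg : ∀ e x, 0 ≤ p e x
  p_le_one : ∀ e x, p e x ≤ 1
  p_zero_outside : ∀ e x, x ∉ Kset (i e) → p e x = 0
  w_mapsTo : ∀ e, Set.MapsTo (w e) (Kset (i e)) (Kset (t e))
  p_pos_somewhere : ∀ e, ∃ x ∈ Kset (i e), 0 < p e x
  p_tsum_one : ∀ j, ∀ x ∈ Kset j, (∑' e : {e : E // i e = j}, p e.val x) = 1

/-- `Ē = E ∪ {∞}` (one-point compactification); with `E` countable its Borel σ-algebra
consists of all subsets. -/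
instance optionMeasurableSpace (E : Type*) : MeasurableSpace (Option E) := ⊤

/-- The code space `Σ̄ = Ē^ℤ`, carrying the product σ-algebra. -/
abbrev CodeSpace (E : Type*) : Type _ := ℤ → Option E

/-- The left shift `S` on the code space, `(Sσ)_{k-1} = σ_k`. -/
def shiftMap (E : Type*) : CodeSpace E → CodeSpace E := fun σ k => σ (k + 1)

/-- The cylinder set `_m[es₀, …, es_{n}] = {σ : σ_{m+k} = es_k}`. -/
def cylSetL {E : Type*} (m : ℤ) (es : List (Option E)) : Set (CodeSpace E) :=
  {σ | ∀ (k : ℕ) (h : k < es.length), σ (m + (k : ℤ)) = es.get ⟨k, h⟩}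

/-- The σ-algebra `𝓕` generated by the cylinder sets `_m[e_m, …, e_0]`, `m ≤ 0`. -/
def pastAlgebra (E : Type*) : MeasurableSpace (CodeSpace E) :=
  MeasurableSpace.generateFrom
    {A | ∃ es : List (Option E), es ≠ [] ∧ A = cylSetL (1 - (es.length : ℤ)) es}

/-- The conditional entropy `h_S(Λ) = H_Λ((_1[e])_{e ∈ Ē} | 𝓕)`. -/
def entropyS {E : Type*} (Λ : Measure (CodeSpace E)) : ℝ≥0∞ :=
  ∑' eo : Option E,
    ∫⁻ σ, ENNReal.ofReal
        (Real.negMulLog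
          ((Λ[Set.indicator {τ : CodeSpace E | τ 1 = eo} (fun _ => (1 : ℝ)) | pastAlgebra E]) σ)) ∂Λ

namespace MarkovSystem

variable {K : Type*} [MetricSpace K] [MeasurableSpace K] {N E : Type*}

/-- The Markov operator `Uf = ∑_e p_e · (f ∘ w_e)` acting on nonnegative Borel functions. -/
def markovOp (M : MarkovSystem K N E) (f : K → ℝ≥0∞) : K → ℝ≥0∞ :=
  fun x => ∑' e : E, ENNReal.ofReal (M.p e x) * f (M.w e x)

/-- The adjoint operator `U*` acting on measures, `(U*ν)(B) = ∫ U(1_B) dν`. -/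
def adjOp (M : MarkovSystem K N E) (ν : Measure K) : Measure K :=
  Measure.sum fun e : E =>
    Measure.map (M.w e) (ν.withDensity fun x => ENNReal.ofReal (M.p e x))

/-- `μ ∈ P(M)`: `μ` is an invariant Borel probability measure, `U*μ = μ`. -/
def IsInvariantMeasure (M : MarkovSystem K N E) (μ : Measure K) : Prop :=
  IsProbabilityMeasure μ ∧ M.adjOp μ = μ

/-- The path space `Σ_G`: all coordinates lie in `E` and `i(σ_{n+1}) = t(σ_n)`. -/
def pathSpace (M : MarkovSystem K N E) : Set (CodeSpace E) :=
  {σ | ∀ n : ℤ, ∃ e e' : E, σ n = some e ∧ σ (n + 1) = some e' ∧ M.i e' = M.t e}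

/-- `T_j = {σ ∈ Σ_G : t(σ_0) = j}`. -/
def Tset (M : MarkovSystem K N E) (j : N) : Set (CodeSpace E) :=
  {σ | σ ∈ M.pathSpace ∧ ∃ e : E, σ 0 = some e ∧ M.t e = j}

/-- `w` extended to `Ē`, with `w_∞ = id`. -/
def wext (M : MarkovSystem K N E) : Option E → K → K := fun o => o.elim id M.w

/-- `p` extended to `Ē`, with `p_∞ = 0`. -/
def pext (M : MarkovSystem K N E) : Option E → K → ℝ := fun o => o.elim (fun _ => 0) M.p

/-- `i` extended to `Ē`, with `i(∞) = j₀`. -/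
def iext (M : MarkovSystem K N E) (j0 : N) : Option E → N := fun o => o.elim j0 M.i

/-- `t` extended to `Ē`, with `t(∞) = j₀`. -/
def text (M : MarkovSystem K N E) (j0 : N) : Option E → N := fun o => o.elim j0 M.t

/-- `iterW M σ n y = w_{σ_0} ∘ w_{σ_{-1}} ∘ ⋯ ∘ w_{σ_{-n}} (y)`. -/
def iterW (M : MarkovSystem K N E) (σ : CodeSpace E) : ℕ → K → K
  | 0, y => M.wext (σ 0) y
  | n + 1, y => M.iterW σ n (M.wext (σ (-(n + 1 : ℤ))) y)

/-- `orbit M j0 xp σ n = w_{σ_0} ∘ ⋯ ∘ w_{σ_{-n}} (x_{i(σ_{-n})})`. -/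
def orbit (M : MarkovSystem K N E) (j0 : N) (xp : N → K) (σ : CodeSpace E) (n : ℕ) : K :=
  M.iterW σ n (xp (M.iext j0 (σ (-(n : ℤ)))))

/-- `D`: the set of `σ ∈ Σ_G` for which `lim_{m → -∞} w_{σ_0} ∘ ⋯ ∘ w_{σ_m}(x_{i(σ_m)})` exists. -/
def codeDomain (M : MarkovSystem K N E) (j0 : N) (xp : N → K) : Set (CodeSpace E) :=
  {σ | σ ∈ M.pathSpace ∧ ∃ l : K, Tendsto (fun n : ℕ => M.orbit j0 xp σ n) atTop (𝓝 l)}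

/-- The coding map `F`: the above limit on `D`, and `x_{t(σ_0)}` elsewhere. -/
def code (M : MarkovSystem K N E) (j0 : N) (xp : N → K) (σ : CodeSpace E) : K :=
  if h : σ ∈ M.codeDomain j0 xp then h.2.choose else xp (M.text j0 (σ 0))

/-- `Λ ∈ E(M)`: `Λ` is a shift-invariant Borel probability measure with `Λ(D) = 1` and
`E_Λ(1_{_1[e]} | 𝓕) = p_e ∘ F` `Λ`-a.e. for every `e ∈ E` (an equilibrium state). -/
def IsEquilibrium (M : MarkovSystem K N E) (j0 : N) (xp : N → K)
    (Λ : Measure (CodeSpace E)) : Prop :=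
  IsProbabilityMeasure Λ ∧ Measure.map (shiftMap E) Λ = Λ ∧
    Λ (M.codeDomain j0 xp) = 1 ∧
    ∀ e : E,
      (Λ[Set.indicator {σ : CodeSpace E | σ 1 = some e} (fun _ => (1 : ℝ)) | pastAlgebra E])
        =ᵐ[Λ] fun σ => M.p e (M.code j0 xp σ)

/-- `pbar` is the family of continuous extensions `p̄_e` of `p_e|_{K_{i(e)}}` to the closure
of `K_{i(e)}`, extended further by zero on `K`. -/
def IsUCExtensionP (M : MarkovSystem K N E) (pbar : E → K → ℝ) : Prop :=
  ∀ e : E, ContinuousOn (pbar e) (closure (M.Kset (M.i e))) ∧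
    (∀ x ∈ M.Kset (M.i e), pbar e x = M.p e x) ∧
    (∀ x, x ∉ closure (M.Kset (M.i e)) → pbar e x = 0)

/-- `wb` is a family of continuous extensions `w̄_e` of `w_e|_{K_{i(e)}}` to the closure
of `K_{i(e)}`. -/
def IsUCExtensionW (M : MarkovSystem K N E) (wb : E → K → K) : Prop :=
  ∀ e : E, ContinuousOn (wb e) (closure (M.Kset (M.i e))) ∧
    (∀ x ∈ M.Kset (M.i e), wb e x = M.w e x)

/-- The Markov system is uniformly continuous: each `w_e|_{K_{i(e)}}` and `p_e|_{K_{i(e)}}`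
is uniformly continuous. -/
def IsUniformlyContinuous (M : MarkovSystem K N E) : Prop :=
  ∀ e : E, UniformContinuousOn (M.w e) (M.Kset (M.i e)) ∧
    UniformContinuousOn (M.p e) (M.Kset (M.i e))

/-- `∂p_e = p̄_e · 1_{cl(K_{i(e)}) \ K_{i(e)}}`. -/
def dp (M : MarkovSystem K N E) (pbar : E → K → ℝ) (e : E) : K → ℝ :=
  Set.indicator (closure (M.Kset (M.i e)) \ M.Kset (M.i e)) (pbar e)

/-- `Λ ∈ Ẽ(M)` (asymptotic state): shift-invariant probability with `Λ(D) = 1` and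
`E_Λ(1_{_1[e]} | 𝓕) = (p̄_e ∘ F)·1_{T_{i(e)}}` `Λ`-a.e. for every `e`. -/
def IsAsymptotic (M : MarkovSystem K N E) (j0 : N) (xp : N → K) (pbar : E → K → ℝ)
    (Λ : Measure (CodeSpace E)) : Prop :=
  IsProbabilityMeasure Λ ∧ Measure.map (shiftMap E) Λ = Λ ∧
    Λ (M.codeDomain j0 xp) = 1 ∧
    ∀ e : E,
      (Λ[Set.indicator {σ : CodeSpace E | σ 1 = some e} (fun _ => (1 : ℝ)) | pastAlgebra E])
        =ᵐ[Λ] Set.indicator (M.Tset (M.i e)) (fun σ => pbar e (M.code j0 xp σ))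

/-- `Λ ∈ E_⊥(M)`: shift-invariant probability with `Λ(D) = 1` and
`E_Λ(1_{_1[e]} | 𝓕) = (∂p_e ∘ F)·1_{T_{i(e)}}` `Λ`-a.e. for every `e`. -/
def IsPerp (M : MarkovSystem K N E) (j0 : N) (xp : N → K) (pbar : E → K → ℝ)
    (Λ : Measure (CodeSpace E)) : Prop :=
  IsProbabilityMeasure Λ ∧ Measure.map (shiftMap E) Λ = Λ ∧
    Λ (M.codeDomain j0 xp) = 1 ∧
    ∀ e : E,
      (Λ[Set.indicator {σ : CodeSpace E | σ 1 = some e} (fun _ => (1 : ℝ)) | pastAlgebra E])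
        =ᵐ[Λ] Set.indicator (M.Tset (M.i e)) (fun σ => M.dp pbar e (M.code j0 xp σ))

/-- `G = ⋃_{k ≥ 0} ⋃_{j ∈ N} S^{-k}(F^{-1}(K_j) ∩ T_j)`. -/
def Gset (M : MarkovSystem K N E) (j0 : N) (xp : N → K) : Set (CodeSpace E) :=
  ⋃ (k : ℕ) (j : N), (shiftMap E)^[k] ⁻¹' ((M.code j0 xp) ⁻¹' (M.Kset j) ∩ M.Tset j)

/-- `M` is non-degenerate: for every asymptotic state `Λ` there is `i ∈ N` with
`Λ(T_i ∩ F^{-1}(K_i)) > 0`. -/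
def IsNonDegenerate (M : MarkovSystem K N E) (j0 : N) (xp : N → K) (pbar : E → K → ℝ) : Prop :=
  ∀ Λ : Measure (CodeSpace E), M.IsAsymptotic j0 xp pbar Λ →
    ∃ i : N, 0 < Λ (M.Tset i ∩ (M.code j0 xp) ⁻¹' (M.Kset i))

/-- `M` is consistent: `F(Λ) ∈ P(M)` for every asymptotic state `Λ`. -/
def IsConsistent (M : MarkovSystem K N E) (j0 : N) (xp : N → K) (pbar : E → K → ℝ) : Prop :=
  ∀ Λ : Measure (CodeSpace E), M.IsAsymptotic j0 xp pbar Λ →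
    M.IsInvariantMeasure (Measure.map (M.code j0 xp) Λ)

/-- `Rf = ∑_e ∂p_e · (f ∘ w̄_e)`. -/
def Rop (M : MarkovSystem K N E) (pbar : E → K → ℝ) (wb : E → K → K)
    (f : K → ℝ≥0∞) : K → ℝ≥0∞ :=
  fun x => ∑' e : E, ENNReal.ofReal (M.dp pbar e x) * f (wb e x)

/-- `Ω = ⋂_{n ≥ 1} {R^n 1 ≥ 1}`. -/
def OmegaSet (M : MarkovSystem K N E) (pbar : E → K → ℝ) (wb : E → K → K) : Set K :=
  ⋂ n : ℕ, {x : K | 1 ≤ (M.Rop pbar wb)^[n + 1] (fun _ => 1) x}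

/-- `ξ_j = ∑_{e, i(e) = j} sup_{x ∈ K_j} p_e(x)`. -/
def xi (M : MarkovSystem K N E) (j : N) : ℝ≥0∞ :=
  ∑' e : {e : E // M.i e = j}, ⨆ x ∈ M.Kset j, ENNReal.ofReal (M.p e.val x)

/-- `M` has a dominating Markov chain: `ξ_j < ∞` for all `j ∈ N`. -/
def HasDominatingChain (M : MarkovSystem K N E) : Prop := ∀ j : N, M.xi j ≠ ⊤

/-- `ξ_j · q_{j j'} = ∑_{e, i(e) = j, t(e) = j'} sup_{x ∈ K_j} p_e(x)`. -/
def xiq (M : MarkovSystem K N E) (j j' : N) : ℝ≥0∞ :=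
  ∑' e : {e : E // M.i e = j ∧ M.t e = j'}, ⨆ x ∈ M.Kset j, ENNReal.ofReal (M.p e.val x)

/-- `c = ∑_{j'} sup_j ξ_j q_{j j'}`. -/
def cConst (M : MarkovSystem K N E) : ℝ≥0∞ := ∑' j' : N, ⨆ j : N, M.xiq j j'

/-- `α^{x_0}_n({j}) = (1/n) ∑_{k=1}^n ((U*)^k δ_{x_0})(K_j)`. -/
def alphaMeas (M : MarkovSystem K N E) (x0 : K) (n : ℕ) (j : N) : ℝ≥0∞ :=
  (n : ℝ≥0∞)⁻¹ * ∑ k ∈ Finset.range n, (M.adjOp^[k + 1] (Measure.dirac x0)) (M.Kset j)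

/-- Condition (T) at `x_0`: the sequence `(α^{x_0}_n)_n` is uniformly tight. -/
def ConditionT (M : MarkovSystem K N E) (x0 : K) : Prop :=
  ∀ ε : ℝ, 0 < ε → ∃ V : Finset N,
    ∀ n : ℕ, (∑' j : {j : N // j ∉ V}, M.alphaMeas x0 (n + 1) j.val) < ENNReal.ofReal ε

/-- `M` is contractive with contraction rate `a`:
`∑_{e, i(e) = j} p_e(x) d(w_e x, w_e y) ≤ a·d(x, y)` on each `K_j`. -/
def IsContractive (M : MarkovSystem K N E) (a : ℝ) : Prop :=
  ∀ j : N, ∀ x ∈ M.Kset j, ∀ y ∈ M.Kset j,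
    (∑' e : {e : E // M.i e = j},
        ENNReal.ofReal (M.p e.val x * dist (M.w e.val x) (M.w e.val y)))
      ≤ ENNReal.ofReal (a * dist x y)

/-- `L(x) = ∑_j d(x, x_j)·1_{K_j}(x)`. -/
def Lfun (M : MarkovSystem K N E) (xp : N → K) : K → ℝ≥0∞ :=
  fun x => ∑' j : N, Set.indicator (M.Kset j) (fun y => ENNReal.ofReal (dist y (xp j))) x

/-- `b = sup_j sup_{x ∈ K_j} ∑_{e, i(e) = j} p_e(x)·d(w_e(x_{i(e)}), x_{t(e)})`. -/
def bConst (M : MarkovSystem K N E) (xp : N → K) : ℝ≥0∞ :=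
  ⨆ j : N, ⨆ x ∈ M.Kset j,
    ∑' e : {e : E // M.i e = j},
      ENNReal.ofReal (M.p e.val x * dist (M.w e.val (xp (M.i e.val))) (xp (M.t e.val)))

/-- `P^m_x` evaluated on a word: `p_{e_0}(x)·p_{e_1}(w_{e_0}x)·⋯`. -/
def wordProb (M : MarkovSystem K N E) : List (Option E) → K → ℝ
  | [], _ => 1
  | o :: rest, x => M.pext o x * M.wordProb rest (M.wext o x)

/-- `Λ = Φ(μ)`: `Λ` is a shift-invariant Borel probability measure with
`Λ(_m[e_m, …, e_n]) = ∫ P^m_x(_m[e_m, …, e_n]) dμ(x)` for all cylinders with `m ≤ 0`. -/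
def IsPhiOf (M : MarkovSystem K N E) (μ : Measure K) (Λ : Measure (CodeSpace E)) : Prop :=
  IsProbabilityMeasure Λ ∧ Measure.map (shiftMap E) Λ = Λ ∧
    ∀ m : ℤ, m ≤ 0 → ∀ es : List (Option E),
      Λ (cylSetL m es) = ∫⁻ x, ENNReal.ofReal (M.wordProb es x) ∂μ

/-- The (negative of the) energy function: `-u(σ) = -log p_{σ_1}(F(σ))` on `D`
(`+∞` if `p_{σ_1}(F(σ)) = 0`) and `+∞` off `D`, valued in `[0, ∞]`. -/
def negEnergy (M : MarkovSystem K N E) (j0 : N) (xp : N → K) (σ : CodeSpace E) : ℝ≥0∞ :=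
  if σ ∈ M.codeDomain j0 xp then
    (σ 1).elim ⊤ fun e =>
      if M.p e (M.code j0 xp σ) = 0 then ⊤
      else ENNReal.ofReal (-Real.log (M.p e (M.code j0 xp σ)))
  else ⊤

/-- The free energy `h_S(Λ) + ∫ u dΛ`, as an extended real number. -/
def freeEnergy (M : MarkovSystem K N E) (j0 : N) (xp : N → K)
    (Λ : Measure (CodeSpace E)) : EReal :=
  (entropyS Λ : EReal) - ((∫⁻ σ, M.negEnergy j0 xp σ ∂Λ : ℝ≥0∞) : EReal)

/-- `Λ₀ ∈ E(u)`: `Λ₀` is a thermodynamic equilibrium state for the energy function `u`. -/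
def IsEquilibriumForU (M : MarkovSystem K N E) (j0 : N) (xp : N → K)
    (Λ0 : Measure (CodeSpace E)) : Prop :=
  IsProbabilityMeasure Λ0 ∧ Measure.map (shiftMap E) Λ0 = Λ0 ∧ entropyS Λ0 ≠ ⊤ ∧
    M.freeEnergy j0 xp Λ0 =
      sSup {r : EReal | ∃ Λ : Measure (CodeSpace E),
        IsProbabilityMeasure Λ ∧ Measure.map (shiftMap E) Λ = Λ ∧ entropyS Λ ≠ ⊤ ∧
          r = M.freeEnergy j0 xp Λ}

end MarkovSystem

end

section ConditionalExpectation

variable {Ω : Type*} {m m0 : MeasurableSpace Ω} {μ : Measure Ω} {f : Ω → ℝ} {c : ℝ≥0∞}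

theorem condExp_smul_measure_ae_eq (hm : m ≤ m0) [IsFiniteMeasure μ] (hf : Integrable f μ)
    (hc : c ≠ ∞) : (c • μ)[f | m] =ᵐ[c • μ] μ[f | m] := by
  have : IsFiniteMeasure (c • μ) := Measure.smul_finite μ hc
  refine (ae_eq_condExp_of_forall_setIntegral_eq hm (hf.smul_measure hc) ?_ ?_ ?_).symm
  · intro s _ _
    exact (integrable_condExp.smul_measure hc).integrableOn
  · intro s hs _
    rw [Measure.restrict_smul, integral_smul_measure, integral_smul_measure,
      setIntegral_condExp hm hf hs]
  · exact stronglyMeasurable_condExp.aestronglyMeasurable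

theorem condExp_smul_restrict_ae_eq (hm : m ≤ m0) [IsFiniteMeasure μ] (hf : Integrable f μ)
    {s : Set Ω} (hs : MeasurableSet[m] s) (hc : c ≠ ∞) :
    (c • μ.restrict s)[f | m] =ᵐ[c • μ.restrict s] μ[f | m] :=
  (condExp_smul_measure_ae_eq hm hf.integrableOn hc).trans
    (Measure.ae_smul_measure (condExp_restrict_ae_eq_restrict hm hs hf) c)

theorem measure_inter_eq_zero_of_condExp_eq_zero (hm : m ≤ m0) [IsFiniteMeasure μ]
    {A B : Set Ω} (hA : MeasurableSet A) (hB : MeasurableSet[m] B)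
    (h : ∀ᵐ ω ∂μ, ω ∈ B → (μ[A.indicator fun _ => (1 : ℝ) | m]) ω = 0) :
    μ (A ∩ B) = 0 := by
  have hint : Integrable (A.indicator fun _ => (1 : ℝ)) μ :=
    (integrable_const 1).indicator hA
  have h1 := setIntegral_condExp hm hint hB
  rw [setIntegral_congr_ae (g := fun _ => (0 : ℝ)) (hm _ hB) h, integral_zero,
    ← Pi.one_def, integral_indicator_one hA, measureReal_restrict_apply hA] at h1
  exact (measureReal_eq_zero_iff).1 h1.symm

end ConditionalExpectation

theorem measurableSet_tendsto_of_measurable_dist {Ω X : Type*} [MeasurableSpace Ω]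
    [MetricSpace X] [CompleteSpace X] [MeasurableSpace X] [BorelSpace X] {u : ℕ → Ω → X}
    (hu : ∀ n, Measurable (u n)) (hd : ∀ k n, Measurable fun ω => dist (u k ω) (u n ω))
    {B : Set X} (hB : MeasurableSet B) :
    MeasurableSet {ω | ∃ l ∈ B, Tendsto (fun n => u n ω) atTop (𝓝 l)} := by
  rcases isEmpty_or_nonempty X with hX | ⟨⟨x₀⟩⟩
  · simp
  set C : Set Ω := {ω | CauchySeq fun n => u n ω} with hC
  have hCm : MeasurableSet C := by
    have : C = ⋂ k : ℕ, ⋃ n : ℕ, ⋂ a : ℕ, ⋂ b : ℕ, ⋂ (_ : n ≤ a), ⋂ (_ : n ≤ b),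
        {ω | dist (u a ω) (u b ω) < 1 / ((k : ℝ) + 1)} := by
      ext ω
      simp only [hC, Set.mem_ofPred_eq, Set.mem_iInter, Set.mem_iUnion]
      rw [Metric.uniformity_basis_dist_inv_nat_succ.cauchySeq_iff]
      simp only [true_imp_iff, Set.mem_ofPred_eq]
      exact forall_congr' fun k => exists_congr fun n =>
        ⟨fun h a b ha hb => h a ha b hb, fun h a ha b hb => h a b ha hb⟩
    rw [this]
    refine .iInter fun k => .iUnion fun n => .iInter fun a => .iInter fun b =>
      .iInter fun _ => .iInter fun _ => measurableSet_lt (hd a b) measurable_const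
  set v : ℕ → Ω → X := fun n ω => if ω ∈ C then u n ω else x₀
  have hv : ∀ ω, ∃ l, Tendsto (fun n => v n ω) atTop (𝓝 l) := by
    intro ω
    by_cases h : ω ∈ C
    · simpa [v, h] using cauchySeq_tendsto_of_complete h
    · exact ⟨x₀, by simp [v, h]⟩
  choose F hF using hv
  have hFm : Measurable F :=
    measurable_of_tendsto_metrizable (fun n => Measurable.ite hCm (hu n) measurable_const)
      (tendsto_pi_nhds.2 hF)
  have : {ω | ∃ l ∈ B, Tendsto (fun n => u n ω) atTop (𝓝 l)} = C ∩ F ⁻¹' B := by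
    ext ω
    constructor
    · rintro ⟨l, hl, h⟩
      have hω : ω ∈ C := h.cauchySeq
      have h' := hF ω
      simp only [v, hω, if_true] at h'
      exact ⟨hω, by rwa [Set.mem_preimage, tendsto_nhds_unique h' h]⟩
    · rintro ⟨hω, h⟩
      have h' := hF ω
      simp only [v, hω, if_true] at h'
      exact ⟨F ω, h, h'⟩
  rw [this]
  exact hCm.inter (hFm hB)

section CodeSpace

variable {E : Type*}

theorem cylSetL_measurable (m : ℤ) (es : List (Option E)) : MeasurableSet (cylSetL m es) := by
  have : cylSetL m es = ⋂ (k : ℕ) (h : k < es.length),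
      (fun σ : CodeSpace E => σ (m + (k : ℤ))) ⁻¹' {es.get ⟨k, h⟩} := by
    ext σ
    simp [cylSetL]
  rw [this]
  exact .iInter fun k => .iInter fun h => measurable_pi_apply _ trivial

theorem pastAlgebra_le : pastAlgebra E ≤ MeasurableSpace.pi :=
  MeasurableSpace.generateFrom_le fun _ ⟨es, _, h⟩ => h ▸ cylSetL_measurable _ es

theorem measurableSet_coord (n : ℤ) (e : E) : MeasurableSet {σ : CodeSpace E | σ n = some e} :=
  @measurable_pi_apply _ (fun _ : ℤ => Option E) _ n {some e} trivial

theorem shiftMap_measurable : Measurable (shiftMap E) :=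
  measurable_pi_lambda _ fun k => measurable_pi_apply (k + 1)

/-- A set of codes determined by finitely many nonpositive coordinates lies in `𝓕`. -/
theorem pastAlgebra_measurableSet_of_dependsOn [Countable E] {s : Set (CodeSpace E)} (n : ℕ)
    (hs : ∀ σ τ : CodeSpace E, (∀ k : ℕ, k ≤ n → σ (-(k : ℤ)) = τ (-(k : ℤ))) → σ ∈ s → τ ∈ s) :
    MeasurableSet[pastAlgebra E] s := by
  have : Countable (Option E) := inferInstanceAs (Countable (Option E))
  have : s = ⋃ es : {es : List (Option E) // es.length = n + 1 ∧
      cylSetL (1 - (es.length : ℤ)) es ⊆ s}, cylSetL (1 - (es.1.length : ℤ)) es.1 := by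
    apply Set.Subset.antisymm
    · intro σ hσ
      set es : List (Option E) := List.ofFn fun k : Fin (n + 1) => σ ((k : ℤ) - n) with hes
      have hlen : es.length = n + 1 := by simp [hes]
      refine Set.mem_iUnion.2 ⟨⟨es, hlen, ?_⟩, ?_⟩
      · intro τ hτ
        refine hs σ τ (fun k hk => ?_) hσ
        have h := hτ (n - k) (by omega)
        rw [show 1 - (es.length : ℤ) + ((n - k : ℕ) : ℤ) = -(k : ℤ) by omega] at h
        rw [h]
        simp only [hes, List.get_eq_getElem, List.getElem_ofFn]
        congr 1
        omega
      · intro k hk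
        simp only [hes, List.get_eq_getElem, List.getElem_ofFn]
        congr 1
        simp
        omega
    · exact Set.iUnion_subset fun es => es.2.2
  rw [this]
  refine MeasurableSet.iUnion fun es => MeasurableSpace.measurableSet_generateFrom
    ⟨es.1, ?_, rfl⟩
  intro h
  simpa [h] using es.2.1

theorem pastAlgebra_measurable_of_dependsOn [Countable E] {X : Type*} [MeasurableSpace X]
    {f : CodeSpace E → X} (n : ℕ)
    (hf : ∀ σ τ : CodeSpace E, (∀ k : ℕ, k ≤ n → σ (-(k : ℤ)) = τ (-(k : ℤ))) → f σ = f τ) :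
    Measurable[pastAlgebra E] f := fun B _ =>
  pastAlgebra_measurableSet_of_dependsOn n fun σ τ h hσ => by
    rwa [Set.mem_preimage, ← hf σ τ h]

end CodeSpace

namespace MarkovSystem

variable {K : Type*} [MetricSpace K] [MeasurableSpace K] {N E : Type*}
  (M : MarkovSystem K N E) {j0 : N} {xp : N → K}

theorem iterW_congr {σ τ : CodeSpace E} {n : ℕ}
    (h : ∀ k : ℕ, k ≤ n → σ (-(k : ℤ)) = τ (-(k : ℤ))) (y : K) :
    M.iterW σ n y = M.iterW τ n y := by
  induction n generalizing y with
  | zero => simpa [iterW] using congrArg (M.wext · y) (h 0 le_rfl)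
  | succ n ih =>
    have h1 := h (n + 1) le_rfl
    push_cast at h1
    rw [iterW, iterW, ih (fun k hk => h k (by omega)), h1]

theorem orbit_congr {σ τ : CodeSpace E} {n : ℕ}
    (h : ∀ k : ℕ, k ≤ n → σ (-(k : ℤ)) = τ (-(k : ℤ))) :
    M.orbit j0 xp σ n = M.orbit j0 xp τ n := by
  rw [orbit, orbit, h n le_rfl, M.iterW_congr h]

theorem iterW_shiftMap (σ : CodeSpace E) (n : ℕ) (y : K) :
    M.iterW (shiftMap E σ) (n + 1) y = M.wext (σ 1) (M.iterW σ n y) := by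
  induction n generalizing y with
  | zero => simp [iterW, shiftMap]
  | succ n ih =>
    rw [iterW, ih, iterW]
    congr 3

theorem orbit_shiftMap (σ : CodeSpace E) (n : ℕ) :
    M.orbit j0 xp (shiftMap E σ) (n + 1) = M.wext (σ 1) (M.orbit j0 xp σ n) := by
  rw [orbit, iterW_shiftMap, orbit]
  simp [shiftMap]

theorem iterW_mem {σ : CodeSpace E} (hσ : σ ∈ M.pathSpace) (n : ℕ) {e e' : E}
    (he : σ 0 = some e) (he' : σ (-(n : ℤ)) = some e') {y : K} (hy : y ∈ M.Kset (M.i e')) :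
    M.iterW σ n y ∈ M.Kset (M.t e) := by
  induction n generalizing y e' with
  | zero =>
    obtain rfl : e = e' := by simpa [he] using he'
    simpa [iterW, he, wext] using M.w_mapsTo e hy
  | succ n ih =>
    obtain ⟨a, b, ha, hb, hab⟩ := hσ (-((n : ℤ) + 1))
    rw [Nat.cast_succ] at he'
    obtain rfl : a = e' := Option.some_injective _ (ha.symm.trans he')
    rw [show -((n : ℤ) + 1) + 1 = -(n : ℤ) by ring] at hb
    rw [iterW, he']
    exact ih hb (by rw [hab]; exact M.w_mapsTo a hy)

theorem orbit_mem (hxp : ∀ j, xp j ∈ M.Kset j) {σ : CodeSpace E} (hσ : σ ∈ M.pathSpace) {e : E}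
    (he : σ 0 = some e) (n : ℕ) : M.orbit j0 xp σ n ∈ M.Kset (M.t e) := by
  obtain ⟨a, _, ha, -, -⟩ := hσ (-(n : ℤ))
  rw [orbit, ha]
  exact M.iterW_mem hσ n he ha (hxp _)

/-- The codes whose orbit converges to a point of `K_{t(σ_0)}`; on `D` this is the event
`F ∈ K_{t(σ_0)}`, but it depends on the nonpositive coordinates only. -/
def innerSet (j0 : N) (xp : N → K) : Set (CodeSpace E) :=
  ⋃ e : E, {σ | σ 0 = some e} ∩
    {σ | ∃ l ∈ M.Kset (M.t e), Tendsto (fun n : ℕ => M.orbit j0 xp σ n) atTop (𝓝 l)}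

theorem tendsto_code {σ : CodeSpace E} (hσ : σ ∈ M.codeDomain j0 xp) :
    Tendsto (fun n : ℕ => M.orbit j0 xp σ n) atTop (𝓝 (M.code j0 xp σ)) := by
  rw [code, dif_pos hσ]
  exact hσ.2.choose_spec

theorem mem_innerSet_iff {σ : CodeSpace E} (hσ : σ ∈ M.codeDomain j0 xp) {e : E}
    (he : σ 0 = some e) : σ ∈ M.innerSet j0 xp ↔ M.code j0 xp σ ∈ M.Kset (M.t e) := by
  simp only [innerSet, Set.mem_iUnion]
  constructor
  · rintro ⟨a, ha, l, hl, h⟩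
    obtain rfl : e = a := by simpa [he] using ha
    rwa [tendsto_nhds_unique (M.tendsto_code hσ) h]
  · exact fun h => ⟨e, he, _, h, M.tendsto_code hσ⟩

theorem mem_Tset_iff {σ : CodeSpace E} (hσ : σ ∈ M.pathSpace) {e : E} (he : σ 0 = some e)
    {j : N} : σ ∈ M.Tset j ↔ M.t e = j := by
  simp [Tset, hσ, he]

theorem mem_Kset_iff {x : K} {j k : N} (hx : x ∈ M.Kset j) : x ∈ M.Kset k ↔ j = k := by
  refine ⟨fun h => ?_, fun h => h ▸ hx⟩
  by_contra hjk
  exact Set.disjoint_left.1 (M.Kset_disjoint hjk) hx h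

theorem pathSpace_coord_zero {σ : CodeSpace E} (hσ : σ ∈ M.pathSpace) :
    ∃ e e' : E, σ 0 = some e ∧ σ 1 = some e' ∧ M.i e' = M.t e := by
  simpa using hσ 0

theorem mem_shiftMap_preimage_innerSet (huc : M.IsUniformlyContinuous)
    (hxp : ∀ j, xp j ∈ M.Kset j) {σ : CodeSpace E} (hσ : σ ∈ M.codeDomain j0 xp)
    (h : σ ∈ M.innerSet j0 xp) : shiftMap E σ ∈ M.innerSet j0 xp := by
  obtain ⟨e, e', he, he', hee'⟩ := M.pathSpace_coord_zero hσ.1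
  rw [M.mem_innerSet_iff hσ he, ← hee'] at h
  refine Set.mem_iUnion.2 ⟨e', by simpa [shiftMap] using he', M.w e' (M.code j0 xp σ),
    M.w_mapsTo e' h, ?_⟩
  rw [← tendsto_add_atTop_iff_nat 1]
  simp only [orbit_shiftMap, he']
  exact ((huc e').1.continuousOn _ h).tendsto.comp (tendsto_nhdsWithin_iff.2
    ⟨M.tendsto_code hσ, .of_forall fun n => hee' ▸ M.orbit_mem hxp hσ.1 he n⟩)

theorem Gset_eq : M.Gset j0 xp = ⋃ k : ℕ,
    (shiftMap E)^[k] ⁻¹' ⋃ j : N, ((M.code j0 xp) ⁻¹' (M.Kset j) ∩ M.Tset j) := by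
  simp only [Gset, Set.preimage_iUnion]

theorem mem_iUnion_Tset_iff {σ : CodeSpace E} (hσ : σ ∈ M.codeDomain j0 xp) :
    σ ∈ (⋃ j : N, ((M.code j0 xp) ⁻¹' (M.Kset j) ∩ M.Tset j)) ↔ σ ∈ M.innerSet j0 xp := by
  obtain ⟨e, e', he, he', hee'⟩ := M.pathSpace_coord_zero hσ.1
  simp [M.mem_innerSet_iff hσ he, M.mem_Tset_iff hσ.1 he]

section Energy

variable {pbar : E → K → ℝ}

theorem pbar_eq_p_of_mem_innerSet (hpbar : M.IsUCExtensionP pbar) {σ : CodeSpace E}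
    (hσ : σ ∈ M.codeDomain j0 xp) (h : σ ∈ M.innerSet j0 xp) (e : E) :
    (M.Tset (M.i e)).indicator (fun σ => pbar e (M.code j0 xp σ)) σ =
      M.p e (M.code j0 xp σ) := by
  obtain ⟨a, -, ha, -, -⟩ := M.pathSpace_coord_zero hσ.1
  rw [M.mem_innerSet_iff hσ ha] at h
  by_cases hT : M.t a = M.i e
  · rw [Set.indicator_of_mem ((M.mem_Tset_iff hσ.1 ha).2 hT)]
    exact (hpbar e).2.1 _ (hT ▸ h)
  · rw [Set.indicator_of_notMem (mt (M.mem_Tset_iff hσ.1 ha).1 hT),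
      M.p_zero_outside _ _ (mt (M.mem_Kset_iff h).1 hT)]

theorem pbar_eq_dp_of_notMem_innerSet (hpbar : M.IsUCExtensionP pbar) {σ : CodeSpace E}
    (hσ : σ ∈ M.codeDomain j0 xp) (h : σ ∉ M.innerSet j0 xp) (e : E) :
    (M.Tset (M.i e)).indicator (fun σ => pbar e (M.code j0 xp σ)) σ =
      (M.Tset (M.i e)).indicator (fun σ => M.dp pbar e (M.code j0 xp σ)) σ := by
  obtain ⟨a, -, ha, -, -⟩ := M.pathSpace_coord_zero hσ.1
  rw [M.mem_innerSet_iff hσ ha] at h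
  by_cases hT : M.t a = M.i e
  · have hm := (M.mem_Tset_iff hσ.1 ha).2 hT
    rw [Set.indicator_of_mem hm, Set.indicator_of_mem hm, dp]
    by_cases hcl : M.code j0 xp σ ∈ closure (M.Kset (M.i e))
    · rw [Set.indicator_of_mem (Set.mem_sdiff_of_mem hcl (hT ▸ h))]
    · rw [Set.indicator_of_notMem (fun h => hcl h.1), (hpbar e).2.2 _ hcl]
  · have hm := mt (M.mem_Tset_iff hσ.1 ha).1 hT
    rw [Set.indicator_of_notMem hm, Set.indicator_of_notMem hm]

end Energy

section Measurability

variable [Countable E]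

theorem orbit_measurable (n : ℕ) :
    Measurable[pastAlgebra E] fun σ => M.orbit j0 xp σ n :=
  pastAlgebra_measurable_of_dependsOn n fun _ _ h => M.orbit_congr h

theorem measurableSet_coord_zero (o : Option E) :
    MeasurableSet[pastAlgebra E] {σ : CodeSpace E | σ 0 = o} :=
  pastAlgebra_measurableSet_of_dependsOn 0 fun _ _ h hσ =>
    (h 0 le_rfl).symm.trans hσ

theorem measurableSet_pathSpace : MeasurableSet M.pathSpace := by
  have : M.pathSpace = ⋂ n : ℤ, ⋃ (e : E) (e' : E) (_ : M.i e' = M.t e),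
      ((fun σ : CodeSpace E => σ n) ⁻¹' {some e} ∩
        (fun σ : CodeSpace E => σ (n + 1)) ⁻¹' {some e'}) := by
    ext σ
    simp only [pathSpace, Set.mem_ofPred_eq, Set.mem_iInter, Set.mem_iUnion, Set.mem_inter_iff,
      Set.mem_preimage, Set.mem_singleton_iff, exists_prop]
    exact forall_congr' fun n => exists_congr fun e => exists_congr fun e' => by tauto
  rw [this]
  exact .iInter fun n => .iUnion fun e => .iUnion fun e' => .iUnion fun _ =>
    (measurableSet_coord n e).inter (measurableSet_coord (n + 1) e')

variable [CompleteSpace K] [BorelSpace K]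

theorem measurableSet_orbit_tendsto {B : Set K} (hB : MeasurableSet B) :
    MeasurableSet[pastAlgebra E]
      {σ | ∃ l ∈ B, Tendsto (fun n : ℕ => M.orbit j0 xp σ n) atTop (𝓝 l)} := by
  refine @measurableSet_tendsto_of_measurable_dist _ _ (pastAlgebra E) _ _ _ _
    (fun n σ => M.orbit j0 xp σ n) M.orbit_measurable (fun k n => ?_) _ hB
  refine pastAlgebra_measurable_of_dependsOn (max k n) fun σ τ h => ?_
  rw [M.orbit_congr (n := k) fun a ha => h a (ha.trans (le_max_left _ _)),
    M.orbit_congr (n := n) fun a ha => h a (ha.trans (le_max_right _ _))]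

theorem measurableSet_innerSet : MeasurableSet[pastAlgebra E] (M.innerSet j0 xp) :=
  .iUnion fun _ => (measurableSet_coord_zero _).inter
    (M.measurableSet_orbit_tendsto (M.Kset_measurable _))

theorem measurableSet_codeDomain : MeasurableSet (M.codeDomain j0 xp) := by
  have h := pastAlgebra_le _ (M.measurableSet_orbit_tendsto (j0 := j0) (xp := xp) .univ)
  simp only [Set.mem_univ, true_and] at h
  exact M.measurableSet_pathSpace.inter h

theorem ae_mem_codeDomain {Λ : Measure (CodeSpace E)} [IsProbabilityMeasure Λ]
    (h : Λ (M.codeDomain j0 xp) = 1) : ∀ᵐ σ ∂Λ, σ ∈ M.codeDomain j0 xp :=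
  (prob_compl_eq_zero_iff M.measurableSet_codeDomain).2 h

theorem innerSet_shift_invariant (huc : M.IsUniformlyContinuous) (hxp : ∀ j, xp j ∈ M.Kset j)
    {Λ : Measure (CodeSpace E)} [IsProbabilityMeasure Λ] (hS : MeasurePreserving (shiftMap E) Λ Λ)
    (hD : Λ (M.codeDomain j0 xp) = 1) :
    shiftMap E ⁻¹' M.innerSet j0 xp =ᵐ[Λ] M.innerSet j0 xp := by
  have hA : MeasurableSet (M.innerSet j0 xp) := pastAlgebra_le _ M.measurableSet_innerSet
  refine (ae_eq_of_ae_subset_of_measure_ge ?_ ?_ hA.nullMeasurableSet (measure_ne_top _ _)).symm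
  · filter_upwards [M.ae_mem_codeDomain hD] with σ hσ h
    exact M.mem_shiftMap_preimage_innerSet huc hxp hσ h
  · rw [hS.measure_preimage hA.nullMeasurableSet]

theorem Gset_ae_eq (huc : M.IsUniformlyContinuous) (hxp : ∀ j, xp j ∈ M.Kset j)
    {Λ : Measure (CodeSpace E)} [IsProbabilityMeasure Λ] (hS : MeasurePreserving (shiftMap E) Λ Λ)
    (hD : Λ (M.codeDomain j0 xp) = 1) : M.Gset j0 xp =ᵐ[Λ] M.innerSet j0 xp := by
  have h0 : (⋃ j : N, ((M.code j0 xp) ⁻¹' (M.Kset j) ∩ M.Tset j)) =ᵐ[Λ] M.innerSet j0 xp := by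
    filter_upwards [M.ae_mem_codeDomain hD] with σ hσ
    exact propext (M.mem_iUnion_Tset_iff hσ)
  rw [Gset_eq, ← Set.iUnion_const (ι := ℕ) (M.innerSet j0 xp)]
  refine Filter.EventuallyEq.countable_iUnion fun k => ?_
  exact ((hS.iterate k).quasiMeasurePreserving.preimage_ae_eq h0).trans
    (hS.quasiMeasurePreserving.preimage_iterate_ae_eq k
      (M.innerSet_shift_invariant huc hxp hS hD))

end Measurability

section Restriction

theorem conditioned_state {Λ : Measure (CodeSpace E)} [IsProbabilityMeasure Λ]
    (hS : MeasurePreserving (shiftMap E) Λ Λ) {D B : Set (CodeSpace E)}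
    (hDm : MeasurableSet D) (hD : ∀ᵐ σ ∂Λ, σ ∈ D) (hB : MeasurableSet[pastAlgebra E] B)
    (hSB : shiftMap E ⁻¹' B =ᵐ[Λ] B) (h0 : Λ B ≠ 0) {g g' : E → CodeSpace E → ℝ}
    (hg : ∀ e : E, (Λ[Set.indicator {σ : CodeSpace E | σ 1 = some e} (fun _ => (1 : ℝ)) |
      pastAlgebra E]) =ᵐ[Λ] g e)
    (hgg' : ∀ e, ∀ σ ∈ D, σ ∈ B → g e σ = g' e σ) :
    IsProbabilityMeasure ((Λ B)⁻¹ • Λ.restrict B) ∧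
      Measure.map (shiftMap E) ((Λ B)⁻¹ • Λ.restrict B) = (Λ B)⁻¹ • Λ.restrict B ∧
      ((Λ B)⁻¹ • Λ.restrict B) D = 1 ∧
      ∀ e : E, (((Λ B)⁻¹ • Λ.restrict B)[Set.indicator {σ : CodeSpace E | σ 1 = some e}
        (fun _ => (1 : ℝ)) | pastAlgebra E]) =ᵐ[(Λ B)⁻¹ • Λ.restrict B] g' e := by
  have hB' : MeasurableSet B := pastAlgebra_le _ hB
  have hc : (Λ B)⁻¹ ≠ ∞ := ENNReal.inv_ne_top.2 h0
  have hp : IsProbabilityMeasure ((Λ B)⁻¹ • Λ.restrict B) :=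
    ⟨by simp [ENNReal.inv_mul_cancel h0 (measure_ne_top _ _)]⟩
  have hres : ∀ᵐ σ ∂((Λ B)⁻¹ • Λ.restrict B), σ ∈ D :=
    Measure.ae_smul_measure (ae_restrict_of_ae hD) _
  refine ⟨hp, ?_, (mem_ae_iff_prob_eq_one hDm).1 hres, fun e => ?_⟩
  · rw [Measure.map_smul, ← Measure.restrict_congr_set hSB,
      ← Measure.restrict_map shiftMap_measurable hB', hS.map_eq,
      Measure.restrict_congr_set hSB]
  · refine (condExp_smul_restrict_ae_eq pastAlgebra_le
      ((integrable_const _).indicator (measurableSet_coord 1 e)) hB hc).trans ?_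
    refine Measure.ae_smul_measure ?_ _
    filter_upwards [ae_restrict_of_ae (hg e), ae_restrict_of_ae hD, ae_restrict_mem hB']
      with σ h1 h2 h3
    rw [h1, hgg' e σ h2 h3]

/-- A past event on which every admissible next symbol has conditional probability zero
is null. -/
theorem measure_eq_zero_of_next_symbol [Countable E] {Λ : Measure (CodeSpace E)}
    [IsProbabilityMeasure Λ] {D B : Set (CodeSpace E)} (hDp : D ⊆ M.pathSpace)
    (hD : ∀ᵐ σ ∂Λ, σ ∈ D) (hB : MeasurableSet[pastAlgebra E] B) {g : E → CodeSpace E → ℝ}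
    (hg : ∀ e : E, (Λ[Set.indicator {σ : CodeSpace E | σ 1 = some e} (fun _ => (1 : ℝ)) |
      pastAlgebra E]) =ᵐ[Λ] g e)
    (hz : ∀ σ ∈ D, σ ∈ B → ∀ a e, σ 0 = some a → M.t a = M.i e → g e σ = 0) : Λ B = 0 := by
  set C : E → Set (CodeSpace E) := fun e =>
    ⋃ (a : E) (_ : M.t a = M.i e), {σ : CodeSpace E | σ 0 = some a} with hC
  have hnull : ∀ e, Λ ({σ | σ 1 = some e} ∩ (C e ∩ B)) = 0 := fun e => by
    refine measure_inter_eq_zero_of_condExp_eq_zero pastAlgebra_le (measurableSet_coord 1 e)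
      (MeasurableSet.inter (.iUnion fun a => .iUnion fun _ => measurableSet_coord_zero _) hB) ?_
    filter_upwards [hg e, hD] with σ h1 h2 h3
    obtain ⟨hσC, hσB⟩ := h3
    simp only [hC, Set.mem_iUnion] at hσC
    obtain ⟨a, ha, ha'⟩ := hσC
    rw [h1, hz σ h2 hσB a e ha' ha]
  refine measure_mono_null_ae ?_ (measure_iUnion_null hnull)
  filter_upwards [hD] with σ hσ hσB
  obtain ⟨e, e', he, he', hee'⟩ := M.pathSpace_coord_zero (hDp hσ)
  refine Set.mem_iUnion.2 ⟨e', he', ?_, hσB⟩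
  simp only [hC, Set.mem_iUnion]
  exact ⟨e, hee'.symm, he⟩

end Restriction

section Support

variable [CompleteSpace K] [BorelSpace K] [Countable E] {Λ : Measure (CodeSpace E)}

theorem IsEquilibrium.measure_compl_innerSet (h : M.IsEquilibrium j0 xp Λ) :
    Λ (M.innerSet j0 xp)ᶜ = 0 := by
  obtain ⟨hp, -, hD, hg⟩ := h
  refine M.measure_eq_zero_of_next_symbol (fun _ h => h.1) (M.ae_mem_codeDomain hD)
    M.measurableSet_innerSet.compl hg fun σ hσ hσB a e ha hae => ?_
  rw [Set.mem_compl_iff, M.mem_innerSet_iff hσ ha, hae] at hσB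
  exact M.p_zero_outside _ _ hσB

theorem IsPerp.measure_innerSet {pbar : E → K → ℝ} (h : M.IsPerp j0 xp pbar Λ) :
    Λ (M.innerSet j0 xp) = 0 := by
  obtain ⟨hp, -, hD, hg⟩ := h
  refine M.measure_eq_zero_of_next_symbol (fun _ h => h.1) (M.ae_mem_codeDomain hD)
    M.measurableSet_innerSet hg fun σ hσ hσB a e ha hae => ?_
  rw [M.mem_innerSet_iff hσ ha, hae] at hσB
  rw [Set.indicator_of_mem ((M.mem_Tset_iff hσ.1 ha).2 hae), dp,
    Set.indicator_of_notMem fun h => h.2 hσB]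

end Support

end MarkovSystem

theorem smul_restrict_of_convex_combination {Ω : Type*} [MeasurableSpace Ω]
    {μ ν ν' : Measure Ω} {a b : ℝ≥0∞} {A : Set Ω} (h : μ = a • ν + b • ν')
    (hν : ν Aᶜ = 0) (hν' : ν' A = 0) (ha : a ≠ 0) (ha' : a ≠ ∞) :
    a⁻¹ • μ.restrict A = ν := by
  rw [h, Measure.restrict_add, Measure.restrict_smul, Measure.restrict_smul,
    Measure.restrict_eq_zero.2 hν', smul_zero, add_zero,
    Measure.restrict_eq_self_of_ae_mem (mem_ae_iff.2 hν), smul_smul,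
    ENNReal.inv_mul_cancel ha ha', one_smul]


variable {K : Type*} [MetricSpace K] [CompleteSpace K] [MeasurableSpace K] [BorelSpace K]
  {N E : Type*} [Countable N] [Countable E]

/-- If `M` is uniformly continuous and `M ∈ Ẽ(M)`, then there exist
`Λ ∈ E(M) ∪ {0}` and `Λ_⊥ ∈ E_⊥(M) ∪ {0}` with `M = M(G)·Λ + (1 − M(G))·Λ_⊥`, and the
decomposition is unique if `0 < M(G) < 1`. -/
theorem asymptotic_state_decomposition
    (M : MarkovSystem K N E) (j0 : N) (xp : N → K) (hxp : ∀ j, xp j ∈ M.Kset j)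
    (huc : M.IsUniformlyContinuous)
    (pbar : E → K → ℝ) (hpbar : M.IsUCExtensionP pbar)
    (Λ0 : Measure (CodeSpace E)) (hΛ0 : M.IsAsymptotic j0 xp pbar Λ0) :
    ∃ Λ Λp : Measure (CodeSpace E),
      (M.IsEquilibrium j0 xp Λ ∨ Λ = 0) ∧ (M.IsPerp j0 xp pbar Λp ∨ Λp = 0) ∧
      Λ0 = Λ0 (M.Gset j0 xp) • Λ + (1 - Λ0 (M.Gset j0 xp)) • Λp ∧
      (0 < Λ0 (M.Gset j0 xp) → Λ0 (M.Gset j0 xp) < 1 →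
        ∀ Λ' Λp' : Measure (CodeSpace E),
          (M.IsEquilibrium j0 xp Λ' ∨ Λ' = 0) → (M.IsPerp j0 xp pbar Λp' ∨ Λp' = 0) →
          Λ0 = Λ0 (M.Gset j0 xp) • Λ' + (1 - Λ0 (M.Gset j0 xp)) • Λp' →
          Λ' = Λ ∧ Λp' = Λp) := by
  obtain ⟨hprob, hmap, hD, hg⟩ := hΛ0
  have hS : MeasurePreserving (shiftMap E) Λ0 Λ0 := ⟨shiftMap_measurable, hmap⟩
  have hAm := M.measurableSet_innerSet (j0 := j0) (xp := xp)
  have hAm' : MeasurableSet (M.innerSet j0 xp) := pastAlgebra_le _ hAm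
  have hG := M.Gset_ae_eq huc hxp hS hD
  have hSA := M.innerSet_shift_invariant huc hxp hS hD
  have hDae := M.ae_mem_codeDomain hD
  rw [measure_congr hG]
  set A := M.innerSet j0 xp
  have hAc : 1 - Λ0 A = Λ0 Aᶜ := (prob_compl_eq_one_sub hAm').symm
  rw [hAc]
  have hsmul : ∀ B, Λ0 B • (Λ0 B)⁻¹ • Λ0.restrict B = Λ0.restrict B := fun B => by
    by_cases h : Λ0 B = 0
    · rw [Measure.restrict_eq_zero.2 h, smul_zero, smul_zero]
    · rw [smul_smul, ENNReal.mul_inv_cancel h (measure_ne_top _ _), one_smul]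
  refine ⟨(Λ0 A)⁻¹ • Λ0.restrict A, (Λ0 Aᶜ)⁻¹ • Λ0.restrict Aᶜ, ?_, ?_, ?_, ?_⟩
  · by_cases h0 : Λ0 A = 0
    · exact .inr (by rw [Measure.restrict_eq_zero.2 h0, smul_zero])
    · exact .inl (MarkovSystem.conditioned_state hS M.measurableSet_codeDomain hDae hAm hSA h0 hg
        fun e σ hσ hσA => M.pbar_eq_p_of_mem_innerSet hpbar hσ hσA e)
  · by_cases h0 : Λ0 Aᶜ = 0
    · exact .inr (by rw [Measure.restrict_eq_zero.2 h0, smul_zero])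
    · exact .inl (MarkovSystem.conditioned_state hS M.measurableSet_codeDomain hDae
        hAm.compl hSA.compl h0 hg fun e σ hσ hσA => M.pbar_eq_dp_of_notMem_innerSet hpbar hσ hσA e)
  · rw [hsmul, hsmul, Measure.restrict_add_restrict_compl hAm']
  · intro hpos hlt Λ' Λp' hΛ' hΛp' heq
    have hν : Λ' Aᶜ = 0 := by
      rcases hΛ' with h | rfl
      · exact MarkovSystem.IsEquilibrium.measure_compl_innerSet M h
      · simp
    have hν' : Λp' A = 0 := by
      rcases hΛp' with h | rfl
      · exact MarkovSystem.IsPerp.measure_innerSet M h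
      · simp
    have hc : Λ0 Aᶜ ≠ 0 := by
      rw [← hAc]
      exact (tsub_pos_of_lt hlt).ne'
    refine ⟨(smul_restrict_of_convex_combination heq hν hν' hpos.ne' (measure_ne_top _ _)).symm,
      (smul_restrict_of_convex_combination ((add_comm _ _).trans heq.symm).symm
        (by rwa [compl_compl]) hν hc (measure_ne_top _ _)).symm⟩
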